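/- arXiv:math/0510370 — 3 statements merged into one kernel-verified Lean document; each statement's English description precedes it below -/
import Mathlib

section
/- Suppose (z_1, …, z_k) and (w_1, …, w_m) are tuples of integers with k ≥ 2 and m ≥ 2, each of which satisfies either the positive pattern (first entry ≥ 0, all interior entries ≥ 1, last entry ≥ 2) or the negative pattern (first entry ≤ 0, all interior entries ≤ −1, last entry ≤ −2). If cf(z_1, …, z_k) = cf(w_1, …, w_m), then k = m and z_j = w_j for every j. -/
/-- The continued fraction value of a nonempty list of integers:
`cf [z₁, …, z_k] = z₁ + 1/(z₂ + 1/(⋯ + 1/z_k))`, using the convention `1/0 = 0` in `ℚ`. -/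
def cf (l : List ℤ) : ℚ := l.foldr (fun z r => (z : ℚ) + 1 / r) 0

/-- The positive pattern for a tuple `(z₁, …, z_k)` (here `0`-indexed, of length `k`):
first entry `≥ 0`, all interior entries `≥ 1`, last entry `≥ 2`. -/
def PosPattern (k : ℕ) (z : ℕ → ℤ) : Prop :=
  0 ≤ z 0 ∧ (∀ j, 0 < j → j < k - 1 → 1 ≤ z j) ∧ 2 ≤ z (k - 1)

/-- The negative pattern for a tuple `(z₁, …, z_k)` (here `0`-indexed, of length `k`):
first entry `≤ 0`, all interior entries `≤ -1`, last entry `≤ -2`. -/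
def NegPattern (k : ℕ) (z : ℕ → ℤ) : Prop :=
  z 0 ≤ 0 ∧ (∀ j, 0 < j → j < k - 1 → z j ≤ -1) ∧ z (k - 1) ≤ -2

/-!
If the entries of `l` are positive and the last one is at least `2`, then `1 < cf l`, so `a` is the
integer part of `cf (a :: l) = a + 1 / cf l`. The value therefore determines the first entry and
the value of the remaining ones, and inductively the whole list. The negative pattern is the
positive one with all signs reversed, and the sign of the value tells the two patterns apart.
-/

lemma cf_nil : cf [] = 0 := rfl

lemma cf_cons (a : ℤ) (l : List ℤ) : cf (a :: l) = a + 1 / cf l := rfl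

lemma cf_map_neg {α : Type*} (z : α → ℤ) (l : List α) : cf (l.map (-z)) = -cf (l.map z) := by
  induction l with
  | nil => simp [cf_nil]
  | cons a l ih =>
    simp only [List.map_cons, cf_cons, ih, Pi.neg_apply, Int.cast_neg, div_neg, neg_add]

/-- The lists that may follow the first entry of a canonical continued fraction expansion. The bound
on the last entry rules out the ambiguity `[…, a, 1]` versus `[…, a + 1]`. The empty list is
allowed: since `cf [] = 0` and `1 / 0 = 0`, it contributes nothing to `cf [a] = a`. -/
def IsRegularTail (l : List ℤ) : Prop := (∀ a ∈ l, 1 ≤ a) ∧ ∀ a ∈ l.getLast?, 2 ≤ a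

namespace IsRegularTail

variable {a b : ℤ} {l l' : List ℤ}

lemma of_cons (h : IsRegularTail (a :: l)) : IsRegularTail l := by
  refine ⟨fun c hc => h.1 c (List.mem_cons_of_mem a hc), fun c hc => h.2 c ?_⟩
  exact List.mem_getLast?_cons hc

lemma one_lt_cf (h : IsRegularTail l) (hne : l ≠ []) : 1 < cf l := by
  induction l with
  | nil => contradiction
  | cons a l ih =>
    rw [cf_cons]
    rcases eq_or_ne l [] with rfl | hl
    · have ha : 2 ≤ a := h.2 a rfl
      rw [cf_nil, div_zero, add_zero]
      exact_mod_cast ha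
    · have ha : (1 : ℚ) ≤ a := by exact_mod_cast h.1 a List.mem_cons_self
      have hcf : 1 < cf l := ih h.of_cons hl
      have : 0 < 1 / cf l := by positivity
      linarith

lemma cf_eq_zero_iff (h : IsRegularTail l) : cf l = 0 ↔ l = [] := by
  refine ⟨fun h0 => ?_, fun hl => hl ▸ cf_nil⟩
  by_contra hne
  linarith [h.one_lt_cf hne]

lemma one_div_cf_mem_Ico (h : IsRegularTail l) : 1 / cf l ∈ Set.Ico (0 : ℚ) 1 := by
  rcases eq_or_ne l [] with rfl | hne
  · simp [cf_nil]
  · have hcf := h.one_lt_cf hne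
    exact ⟨by positivity, (div_lt_one (by positivity)).2 hcf⟩

lemma floor_cf_cons (h : IsRegularTail l) (a : ℤ) : ⌊cf (a :: l)⌋ = a := by
  rw [cf_cons, Int.floor_intCast_add, Int.floor_eq_zero_iff.2 h.one_div_cf_mem_Ico, add_zero]

lemma eq_and_cf_eq_of_cf_cons_eq (hl : IsRegularTail l) (hl' : IsRegularTail l')
    (h : cf (a :: l) = cf (b :: l')) : a = b ∧ cf l = cf l' := by
  obtain rfl : a = b := by rw [← hl.floor_cf_cons a, h, hl'.floor_cf_cons]
  simpa [cf_cons] using h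

lemma eq_of_cf_eq (hl : IsRegularTail l) (hl' : IsRegularTail l') (h : cf l = cf l') : l = l' := by
  induction l generalizing l' with
  | nil => exact (hl'.cf_eq_zero_iff.1 h.symm).symm
  | cons a l ih =>
    cases l' with
    | nil => exact hl.cf_eq_zero_iff.1 h
    | cons b l' =>
      obtain ⟨rfl, htail⟩ := eq_and_cf_eq_of_cf_cons_eq hl.of_cons hl'.of_cons h
      rw [ih hl.of_cons hl'.of_cons htail]

lemma cons_eq_cons_of_cf_eq (hl : IsRegularTail l) (hl' : IsRegularTail l')
    (h : cf (a :: l) = cf (b :: l')) : a :: l = b :: l' := by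
  obtain ⟨rfl, htail⟩ := eq_and_cf_eq_of_cf_cons_eq hl hl' h
  rw [eq_of_cf_eq hl hl' htail]

lemma cf_cons_pos (h : IsRegularTail l) (hne : l ≠ []) (ha : 0 ≤ a) : 0 < cf (a :: l) := by
  have hcf := h.one_lt_cf hne
  rw [cf_cons]
  positivity

end IsRegularTail

lemma map_range_eq_map_range_iff {α : Type*} {k m : ℕ} {z w : ℕ → α} :
    (List.range k).map z = (List.range m).map w ↔ k = m ∧ ∀ j < k, z j = w j := by
  constructor
  · intro h
    obtain rfl : k = m := by simpa using congrArg List.length h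
    simpa using h
  · rintro ⟨rfl, h⟩
    simpa using h

section Patterns

variable {k m : ℕ} {z w : ℕ → ℤ}

lemma PosPattern.exists_map_range_eq_cons (h : PosPattern k z) (hk : 2 ≤ k) :
    ∃ l ≠ [], IsRegularTail l ∧ (List.range k).map z = z 0 :: l := by
  obtain ⟨n, rfl⟩ := Nat.exists_eq_add_of_le' hk
  obtain ⟨-, hinterior, hlast : 2 ≤ z (n + 1)⟩ := h
  refine ⟨(List.range (n + 1)).map (fun j => z (j + 1)), by simp, ⟨?_, ?_⟩, ?_⟩
  · simp only [List.forall_mem_map, List.mem_range]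
    intro j hj
    rcases (Nat.lt_succ_iff.1 hj).lt_or_eq with hlt | rfl
    · exact hinterior (j + 1) j.succ_pos (by omega)
    · omega
  · simpa [List.range_succ] using hlast
  · rw [List.range_succ_eq_map, List.map_cons, List.map_map]
    rfl

lemma PosPattern.cf_pos (h : PosPattern k z) (hk : 2 ≤ k) : 0 < cf ((List.range k).map z) := by
  obtain ⟨l, hne, hl, hcons⟩ := h.exists_map_range_eq_cons hk
  exact hcons ▸ hl.cf_cons_pos hne h.1

lemma PosPattern.eq_of_cf_eq (hz : PosPattern k z) (hw : PosPattern m w) (hk : 2 ≤ k) (hm : 2 ≤ m)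
    (h : cf ((List.range k).map z) = cf ((List.range m).map w)) :
    k = m ∧ ∀ j < k, z j = w j := by
  obtain ⟨l, -, hl, hzl⟩ := hz.exists_map_range_eq_cons hk
  obtain ⟨l', -, hl', hwl'⟩ := hw.exists_map_range_eq_cons hm
  rw [← map_range_eq_map_range_iff, hzl, hwl']
  rw [hzl, hwl'] at h
  exact hl.cons_eq_cons_of_cf_eq hl' h

lemma NegPattern.neg (h : NegPattern k z) : PosPattern k (-z) := by
  obtain ⟨hfirst, hinterior, hlast⟩ := h
  exact ⟨neg_nonneg.2 hfirst, fun j hpos hlt => le_neg.1 (hinterior j hpos hlt), le_neg.1 hlast⟩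

lemma NegPattern.cf_neg (h : NegPattern k z) (hk : 2 ≤ k) : cf ((List.range k).map z) < 0 := by
  simpa only [cf_map_neg, neg_pos] using h.neg.cf_pos hk

lemma NegPattern.eq_of_cf_eq (hz : NegPattern k z) (hw : NegPattern m w) (hk : 2 ≤ k) (hm : 2 ≤ m)
    (h : cf ((List.range k).map z) = cf ((List.range m).map w)) :
    k = m ∧ ∀ j < k, z j = w j := by
  have hneg : cf ((List.range k).map (-z)) = cf ((List.range m).map (-w)) := by
    rw [cf_map_neg, cf_map_neg, h]
  simpa only [Pi.neg_apply, neg_inj] using hz.neg.eq_of_cf_eq hw.neg hk hm hneg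

end Patterns

/-- Uniqueness of the canonical continued fraction expansion: two tuples of lengths `≥ 2`,
each satisfying the positive or the negative pattern, which have the same continued
fraction value, must coincide. -/
theorem continued_fraction_unique (k m : ℕ) (z w : ℕ → ℤ)
    (hk : 2 ≤ k) (hm : 2 ≤ m)
    (hz : PosPattern k z ∨ NegPattern k z)
    (hw : PosPattern m w ∨ NegPattern m w)
    (h : cf ((List.range k).map z) = cf ((List.range m).map w)) :
    k = m ∧ ∀ j < k, z j = w j := by
  rcases hz with hz | hz <;> rcases hw with hw | hw
  · exact hz.eq_of_cf_eq hw hk hm h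
  · exact absurd h ((hw.cf_neg hm).trans (hz.cf_pos hk)).ne'
  · exact absurd h ((hz.cf_neg hk).trans (hw.cf_pos hm)).ne
  · exact hz.eq_of_cf_eq hw hk hm h
end

section
/- Let l ≥ 1 and let z_1, …, z_l be integers with z_1 ≥ 0 and z_j ≥ 1 for all 2 ≤ j ≤ l. Then the sequence of denominators (in lowest terms) of cf(z_1, …, z_l, j) is strictly increasing in j for j ≥ 1, and the sequence of values j ↦ cf(z_1, …, z_l, j) is strictly monotone: it is either strictly increasing for all j ≥ 1 or strictly decreasing for all j ≥ 1. -/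
/-!
Prepending an integer `a` to a list with value `p / q > 0` in lowest terms gives the value
`a + q / p = (a p + q) / p`, again in lowest terms. The new denominator is the old numerator, so it
is enough that numerators strictly increase with the last entry; this is inherited when `a ≥ 1`
provided that denominators do not decrease. As for values, `x ↦ a + 1 / x` is strictly decreasing on
`x > 0`, so each prepended entry reverses the direction of monotonicity.
-/

theorem forall_mem_tail_map_range {α : Type*} {p : α → Prop} {f : ℕ → α} {n : ℕ} :
    (∀ b ∈ ((List.range n).map f).tail, p b) ↔ ∀ i, 1 ≤ i → i < n → p (f i) := by
  rw [← List.map_tail, List.tail_range, List.forall_mem_map]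
  refine forall_congr' fun i => ?_
  rw [List.mem_range'_1, and_imp]
  exact forall_congr' fun hi => imp_congr_left (by omega)

theorem num_intCast_add (a : ℤ) (x : ℚ) : (a + x).num = a * x.den + x.num := by
  have hx : x * x.den = x.num := Rat.mul_den_eq_num x
  have h : (a + x) * x.den = (a + x).num := by
    simpa only [Rat.intCast_add_den] using Rat.mul_den_eq_num (a + x)
  rw [add_mul, hx] at h
  exact_mod_cast h.symm

theorem num_inv_of_pos {x : ℚ} (hx : 0 < x) : x⁻¹.num = x.den := by
  rw [Rat.num_inv, Int.sign_eq_one_of_pos (Rat.num_pos.mpr hx), one_mul]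

theorem den_inv_of_pos {x : ℚ} (hx : 0 < x) : (x⁻¹.den : ℤ) = x.num := by
  rw [Rat.den_inv_of_ne_zero hx.ne', Int.natAbs_of_nonneg (Rat.num_nonneg.mpr hx.le)]

namespace cf

theorem singleton (j : ℤ) : cf [j] = j := by
  simp [cf]

theorem cons (a : ℤ) (L : List ℤ) : cf (a :: L) = a + (cf L)⁻¹ := by
  rw [← one_div]
  rfl

theorem num_cons (a : ℤ) {L : List ℤ} (hL : 0 < cf L) :
    (cf (a :: L)).num = a * (cf L).num + (cf L).den := by
  rw [cons, num_intCast_add, den_inv_of_pos hL, num_inv_of_pos hL]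

theorem den_cons (a : ℤ) {L : List ℤ} (hL : 0 < cf L) :
    ((cf (a :: L)).den : ℤ) = (cf L).num := by
  rw [cons, Rat.intCast_add_den, den_inv_of_pos hL]

theorem append_singleton_pos {L : List ℤ} (hL : ∀ b ∈ L, 0 ≤ b) {j : ℤ} (hj : 0 < j) :
    0 < cf (L ++ [j]) := by
  induction L with
  | nil => simpa [singleton] using hj
  | cons a L ih =>
    obtain ⟨ha, hL⟩ := List.forall_mem_cons.mp hL
    rw [List.cons_append, cons]
    exact add_pos_of_nonneg_of_pos (Int.cast_nonneg ha) (inv_pos.mpr (ih hL))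

theorem strictMonoOn_num_and_monotoneOn_den_append_singleton {L : List ℤ} (hL : ∀ b ∈ L, 1 ≤ b) :
    StrictMonoOn (fun j : ℤ => (cf (L ++ [j])).num) (Set.Ici 1) ∧
      MonotoneOn (fun j : ℤ => (cf (L ++ [j])).den) (Set.Ici 1) := by
  induction L with
  | nil =>
    simp only [List.nil_append, singleton, Rat.num_intCast, Rat.den_intCast]
    exact ⟨strictMonoOn_id, monotoneOn_const⟩
  | cons a L ih =>
    obtain ⟨ha, hL⟩ := List.forall_mem_cons.mp hL
    obtain ⟨hnum, hden⟩ := ih hL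
    have hpos {j : ℤ} (hj : 1 ≤ j) : 0 < cf (L ++ [j]) :=
      append_singleton_pos (fun b hb => zero_le_one.trans (hL b hb)) hj
    refine ⟨fun i hi j hj hij => ?_, fun i hi j hj hij => ?_⟩
    · simp only [List.cons_append, num_cons a (hpos hi), num_cons a (hpos hj)]
      have hnum_lt : a * (cf (L ++ [i])).num < a * (cf (L ++ [j])).num :=
        mul_lt_mul_of_pos_left (hnum hi hj hij) (zero_lt_one.trans_le ha)
      exact add_lt_add_of_lt_of_le hnum_lt (Int.ofNat_le.mpr (hden hi hj hij.le))
    · zify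
      simp only [List.cons_append, den_cons a (hpos hi), den_cons a (hpos hj)]
      exact hnum.monotoneOn hi hj hij

theorem strictMonoOn_den_cons_append_singleton (a : ℤ) {L : List ℤ} (hL : ∀ b ∈ L, 1 ≤ b) :
    StrictMonoOn (fun j : ℤ => (cf (a :: L ++ [j])).den) (Set.Ici 1) := by
  have hpos {j : ℤ} (hj : 1 ≤ j) : 0 < cf (L ++ [j]) :=
    append_singleton_pos (fun b hb => zero_le_one.trans (hL b hb)) hj
  intro i hi j hj hij
  zify
  simp only [List.cons_append, den_cons a (hpos hi), den_cons a (hpos hj)]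
  exact (strictMonoOn_num_and_monotoneOn_den_append_singleton hL).1 hi hj hij

theorem strictMonoOn_or_strictAntiOn_append_singleton {L : List ℤ} (hL : ∀ b ∈ L.tail, 0 ≤ b) :
    StrictMonoOn (fun j : ℤ => cf (L ++ [j])) (Set.Ici 1) ∨
      StrictAntiOn (fun j : ℤ => cf (L ++ [j])) (Set.Ici 1) := by
  induction L with
  | nil =>
    simp only [List.nil_append, singleton]
    exact Or.inl (Int.cast_strictMono.strictMonoOn _)
  | cons a L ih =>
    have hpos : Set.MapsTo (fun j : ℤ => cf (L ++ [j])) (Set.Ici 1) (Set.Ioi 0) :=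
      fun j hj => append_singleton_pos hL hj
    simp only [List.cons_append, cons]
    rcases ih fun b hb => hL b (List.mem_of_mem_tail hb) with hmono | hanti
    · exact Or.inr ((inv_strictAntiOn.comp_strictMonoOn hmono hpos).const_add _)
    · exact Or.inl ((inv_strictAntiOn.comp hanti hpos).const_add _)

end cf

theorem cf_append_denom_and_value_monotone_general {L : List ℤ} (hne : L ≠ [])
    (hL : ∀ b ∈ L.tail, 1 ≤ b) :
    StrictMonoOn (fun j : ℤ => (cf (L ++ [j])).den) (Set.Ici 1) ∧
      (StrictMonoOn (fun j : ℤ => cf (L ++ [j])) (Set.Ici 1) ∨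
        StrictAntiOn (fun j : ℤ => cf (L ++ [j])) (Set.Ici 1)) := by
  obtain ⟨a, M, rfl⟩ := List.exists_cons_of_ne_nil hne
  exact ⟨cf.strictMonoOn_den_cons_append_singleton a hL,
    cf.strictMonoOn_or_strictAntiOn_append_singleton fun b hb => zero_le_one.trans (hL b hb)⟩

/-- Let `l ≥ 1` and `z₁, …, z_l` be integers with `z₁ ≥ 0` and `z_j ≥ 1` for `2 ≤ j ≤ l`
(here `0`-indexed: `0 ≤ z 0` and `1 ≤ z j` for `1 ≤ j < l`). Then the reduced
denominators of `cf(z₁, …, z_l, j)` are strictly increasing in `j ≥ 1`, and the values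
`j ↦ cf(z₁, …, z_l, j)` are strictly monotone: either strictly increasing for all `j ≥ 1`
or strictly decreasing for all `j ≥ 1`. -/
theorem cf_append_denom_and_value_monotone (l : ℕ) (z : ℕ → ℤ) (hl : 1 ≤ l)
    (h0 : 0 ≤ z 0) (hpos : ∀ j, 1 ≤ j → j < l → 1 ≤ z j) :
    (∀ j : ℤ, 1 ≤ j →
      (cf ((List.range l).map z ++ [j])).den < (cf ((List.range l).map z ++ [j + 1])).den) ∧
    ((∀ j : ℤ, 1 ≤ j →
        cf ((List.range l).map z ++ [j]) < cf ((List.range l).map z ++ [j + 1])) ∨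
     (∀ j : ℤ, 1 ≤ j →
        cf ((List.range l).map z ++ [j + 1]) < cf ((List.range l).map z ++ [j]))) := by
  have hne : (List.range l).map z ≠ [] := by simpa using Nat.one_le_iff_ne_zero.mp hl
  obtain ⟨hden, hval⟩ :=
    cf_append_denom_and_value_monotone_general hne (forall_mem_tail_map_range.mpr hpos)
  exact ⟨fun j hj => hden hj (Int.le_add_one hj) (lt_add_one j),
    hval.imp (fun hmono j hj => hmono hj (Int.le_add_one hj) (lt_add_one j))
      fun hanti j hj => hanti hj (Int.le_add_one hj) (lt_add_one j)⟩
end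

section
/- Let N ≥ 1 and let R_1, …, R_N be rational numbers, none of which is an integer. Then there exist integers i_1, …, i_N with i_1 + i_2 + ⋯ + i_N = 0 such that, setting R′_j = R_j + i_j for each j, either (A) all of R′_1, …, R′_N are positive or all of them are negative, or (B) among R′_1, …, R′_N there occur both a positive and a negative number, and |R′_j| < 1 holds for every j. -/
/-!
For non-integral `x`, the translate `x + n` is positive exactly when `n ≥ -⌊x⌋` and negative
exactly when `n ≤ -⌊x⌋ - 1`. Write `b j = -⌊R j⌋`. If `∑ b j ≤ 0`, some integer tuple of sum zero
lies above `b` and makes every fraction positive; if `0 ≤ ∑ (b j - 1)`, some tuple of sum zero lies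
below `b - 1` and makes every fraction negative. Otherwise interpolate a tuple of sum zero between
`b - 1` and `b`: every translate then lies in `(-1, 1)`, and the strict inequalities
`∑ (b j - 1) < 0 < ∑ b j` force both signs to occur.
-/

section SumPrescribed

variable {ι α : Type*} [AddCommGroup α]

theorem exists_ge_sum_eq [Fintype ι] [Nonempty ι] [PartialOrder α] [IsOrderedAddMonoid α]
    {g : ι → α} {c : α} (hg : ∑ i, g i ≤ c) : ∃ f, g ≤ f ∧ ∑ i, f i = c := by
  classical
  obtain ⟨i₀⟩ := ‹Nonempty ι›
  refine ⟨g + Pi.single i₀ (c - ∑ i, g i), ?_, ?_⟩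
  · exact le_add_of_nonneg_right (Pi.single_nonneg.2 (sub_nonneg.2 hg))
  · simp [Finset.sum_add_distrib]

theorem exists_le_sum_eq [Fintype ι] [Nonempty ι] [PartialOrder α] [IsOrderedAddMonoid α]
    {h : ι → α} {c : α} (hh : c ≤ ∑ i, h i) : ∃ f, f ≤ h ∧ ∑ i, f i = c :=
  exists_ge_sum_eq (α := αᵒᵈ) hh

theorem exists_mem_Icc_sum_eq [Lattice α] [IsOrderedAddMonoid α] (s : Finset ι)
    {g h : ι → α} {c : α} (hgh : g ≤ h) (hg : ∑ i ∈ s, g i ≤ c) (hh : c ≤ ∑ i ∈ s, h i) :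
    ∃ f ∈ Set.Icc g h, ∑ i ∈ s, f i = c := by
  classical
  induction s using Finset.induction_on generalizing c with
  | empty => exact ⟨g, ⟨le_rfl, hgh⟩, le_antisymm hg hh⟩
  | insert a s ha ih =>
    rw [Finset.sum_insert ha] at hg hh
    -- The least value at `a`, above `g a`, that the upper bounds on `s` can complete to `c`.
    let x := g a ⊔ (c - ∑ i ∈ s, h i)
    have hxh : x ≤ h a := sup_le (hgh a) (sub_le_iff_le_add.2 hh)
    have hxg : ∑ i ∈ s, g i ≤ c - x := le_sub_comm.1 <|
      sup_le (le_sub_iff_add_le.2 hg) (sub_le_sub_left (Finset.sum_le_sum fun i _ => hgh i) c)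
    obtain ⟨f, ⟨hgf, hfh⟩, hf⟩ := ih hxg (sub_le_comm.1 le_sup_right)
    refine ⟨Function.update f a x, ⟨?_, ?_⟩, ?_⟩
    · exact le_update_iff.2 ⟨le_sup_left, fun i _ => hgf i⟩
    · exact update_le_iff.2 ⟨hxh, fun i _ => hfh i⟩
    · rw [Finset.sum_insert ha, Finset.sum_update_of_notMem ha, hf, Function.update_self,
        add_sub_cancel]

end SumPrescribed

section IntegerTranslates

variable {K : Type*} [Ring K] [LinearOrder K] [IsStrictOrderedRing K] [FloorRing K] {x : K} {n : ℤ}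

theorem add_intCast_neg_iff : x + n < 0 ↔ n < -⌊x⌋ := by
  rw [← lt_neg_iff_add_neg, ← Int.cast_neg, ← Int.floor_lt, lt_neg]

theorem add_intCast_pos_iff (hx : x ≠ ⌊x⌋) : 0 < x + n ↔ -⌊x⌋ ≤ n := by
  have hne : x + n ≠ 0 := fun h => hx (by
    rw [eq_neg_of_add_eq_zero_left h, ← Int.cast_neg, Int.floor_intCast])
  rw [← not_lt, ← add_intCast_neg_iff, not_lt, le_iff_lt_or_eq, or_iff_left hne.symm]

theorem abs_add_intCast_lt_one_iff (hx : x ≠ ⌊x⌋) :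
    |x + n| < 1 ↔ n ∈ Set.Icc (-⌊x⌋ - 1) (-⌊x⌋) := by
  have hlower : -1 < x + n ↔ -⌊x⌋ - 1 ≤ n := by
    rw [neg_lt_iff_pos_add, add_assoc, ← Int.cast_one, ← Int.cast_add, add_intCast_pos_iff hx,
      sub_le_iff_le_add]
  have hupper : x + n < 1 ↔ n ≤ -⌊x⌋ := by
    rw [← sub_neg, add_sub_assoc, ← Int.cast_one, ← Int.cast_sub, add_intCast_neg_iff,
      Int.sub_one_lt_iff]
  rw [abs_lt, hlower, hupper, Set.mem_Icc]

end IntegerTranslates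

theorem montesinos_normalization_general {ι K : Type*} [Fintype ι] [Ring K] [LinearOrder K]
    [IsStrictOrderedRing K] [FloorRing K] (R : ι → K) (hR : ∀ j, ¬ ∃ n : ℤ, R j = (n : K)) :
    ∃ i : ι → ℤ, (∑ j, i j) = 0 ∧
      (((∀ j, 0 < R j + (i j : K)) ∨ (∀ j, R j + (i j : K) < 0)) ∨
       ((∃ j, 0 < R j + (i j : K)) ∧ (∃ j, R j + (i j : K) < 0) ∧
        ∀ j, |R j + (i j : K)| < 1)) := by
  have hfloor (j : ι) : R j ≠ ⌊R j⌋ := fun h => hR j ⟨_, h⟩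
  rcases isEmpty_or_nonempty ι with _ | _
  · exact ⟨0, by simp⟩
  let b : ι → ℤ := fun j => -⌊R j⌋
  rcases le_or_gt (∑ j, b j) 0 with hnonpos | hpos
  · obtain ⟨i, hbi, hsum⟩ := exists_ge_sum_eq hnonpos
    exact ⟨i, hsum, .inl (.inl fun j => (add_intCast_pos_iff (hfloor j)).2 (hbi j))⟩
  rcases le_or_gt 0 (∑ j, (b j - 1)) with hnonneg | hneg
  · obtain ⟨i, hib, hsum⟩ := exists_le_sum_eq hnonneg
    exact ⟨i, hsum, .inl (.inr fun j => add_intCast_neg_iff.2 (Int.lt_of_le_sub_one (hib j)))⟩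
  obtain ⟨i, ⟨hbi, hib⟩, hsum⟩ := exists_mem_Icc_sum_eq Finset.univ
    (fun j => sub_le_self (b j) zero_le_one) hneg.le hpos.le
  obtain ⟨p, -, hp⟩ := Finset.exists_lt_of_sum_lt (hneg.trans_eq hsum.symm)
  obtain ⟨q, -, hq⟩ := Finset.exists_lt_of_sum_lt (hsum.trans_lt hpos)
  exact ⟨i, hsum, .inr ⟨⟨p, (add_intCast_pos_iff (hfloor p)).2 (Int.le_of_sub_one_lt hp)⟩,
    ⟨q, add_intCast_neg_iff.2 hq⟩,
    fun j => (abs_add_intCast_lt_one_iff (hfloor j)).2 ⟨hbi j, hib j⟩⟩⟩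

/-- Normalization of tuples of non-integral rational tangle fractions: if `N ≥ 1` and
`R₁, …, R_N` are rational numbers, none of which is an integer, then there are integers
`i₁, …, i_N` summing to `0` such that, with `R′_j = R_j + i_j`, either (A) all the `R′_j`
have a common sign, or (B) both signs occur among the `R′_j` and `|R′_j| < 1` for all `j`. -/
theorem montesinos_normalization (N : ℕ) (hN : 1 ≤ N) (R : Fin N → ℚ)
    (hR : ∀ j, ¬ ∃ n : ℤ, R j = (n : ℚ)) :
    ∃ i : Fin N → ℤ, (∑ j, i j) = 0 ∧
      (((∀ j, 0 < R j + (i j : ℚ)) ∨ (∀ j, R j + (i j : ℚ) < 0)) ∨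
       ((∃ j, 0 < R j + (i j : ℚ)) ∧ (∃ j, R j + (i j : ℚ) < 0) ∧
        ∀ j, |R j + (i j : ℚ)| < 1)) :=
  montesinos_normalization_general R hR
end
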